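/- arXiv:2203.13942 — 2 statements merged into one kernel-verified Lean document; each statement's English description precedes it below -/
import Mathlib

section
/- (Jordan's inversion theorem.) Let f : ℝ → ℝ be Lebesgue integrable on ℝ and of bounded variation on all of ℝ (i.e., its total variation over ℝ is finite). Fix x ∈ ℝ and let f(x−) and f(x+) denote the left and right limits of f at x (which exist since f is of bounded variation). Then (f(x−)+f(x+))/2 = (1/(2π)) · lim_{T→∞} ∫_{-T}^{T} e^{ixs} f̂(s) ds. -/
/-!
Convolving with the Dirichlet kernel `D_T(u) = sin (T u) / (π u)`, the truncated inversion integral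
at `x` is `∫ u > 0, D_T(u) (f (x - u) + f (x + u))`, so it suffices to show that
`∫ u > 0, D_T(u) g(u)` tends to `g(0+) / 2` whenever `g` has bounded variation near `0`.

Away from `0` this is the Riemann–Lebesgue lemma. Near `0` the integrals of `D_T` over intervals are
bounded uniformly in `T`, so by the second mean value theorem the contribution of `g - g(0+)` on
`(0, η]` is controlled by the variation of `g` there, which tends to `0` with `η`. The constant
`1 / 2`, that is, the value `π / 2` of `∫ u > 0, sin u / u`, is read off from the Gaussian, for
which inversion at `0` is an explicit computation.
-/

open MeasureTheory Filter Topology Set Real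

section SecondMeanValue

theorem exists_ae_eq_Ioc_of_upward_closed {S : Set ℝ} {a b : ℝ} (hab : a ≤ b) (hS : S ⊆ Ioc a b)
    (hup : ∀ u ∈ S, ∀ v ∈ Ioc a b, u ≤ v → v ∈ S) :
    ∃ c ∈ Icc a b, S =ᵐ[volume] Ioc c b := by
  rcases S.eq_empty_or_nonempty with rfl | hne
  · exact ⟨b, right_mem_Icc.2 hab, by simp⟩
  have hlower : a ∈ lowerBounds S := fun u hu => (hS hu).1.le
  have hbdd : BddBelow S := ⟨a, hlower⟩
  have hac : a ≤ sInf S := le_csInf hne hlower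
  have hcb : sInf S ≤ b := (csInf_le hbdd hne.some_mem).trans (hS hne.some_mem).2
  have hinner : Ioc (sInf S) b ⊆ S := fun u hu =>
    let ⟨v, hv, hvu⟩ := exists_lt_of_csInf_lt hne hu.1
    hup v hv u ⟨hac.trans_lt hu.1, hu.2⟩ hvu.le
  have houter : S ⊆ Icc (sInf S) b := fun u hu => ⟨csInf_le hbdd hu, (hS hu).2⟩
  exact ⟨sInf S, ⟨hac, hcb⟩,
    (houter.eventuallyLE.trans Ioc_ae_eq_Icc.symm.le).antisymm hinner.eventuallyLE⟩

variable {a b C : ℝ} {k : ℝ → ℝ}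

theorem norm_le_of_monotoneOn_of_nonneg {h : ℝ → ℝ} (hmono : MonotoneOn h (Ioc a b))
    (hnonneg : ∀ u ∈ Ioc a b, 0 ≤ h u) {u : ℝ} (hu : u ∈ Ioc a b) : ‖h u‖ ≤ h b := by
  rw [norm_of_nonneg (hnonneg u hu)]
  exact hmono hu ⟨hu.1.trans_le hu.2, le_rfl⟩ hu.2

theorem integrableOn_mul_of_monotoneOn {h : ℝ → ℝ} (hk : IntegrableOn k (Ioc a b))
    (hmono : MonotoneOn h (Ioc a b)) (hnonneg : ∀ u ∈ Ioc a b, 0 ≤ h u) :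
    IntegrableOn (fun u => k u * h u) (Ioc a b) :=
  hk.mul_bdd (c := h b)
    (aemeasurable_restrict_of_monotoneOn measurableSet_Ioc hmono).aestronglyMeasurable
    ((ae_restrict_mem measurableSet_Ioc).mono fun _ =>
      norm_le_of_monotoneOn_of_nonneg hmono hnonneg)

-- The layer-cake formula `h u = ∫ s in (0, h b], 1_{s < h u}` exhibits `h` as a superposition of
-- indicators of the intervals `{s < h}`, which all end at `b`.
theorem setIntegral_mul_eq_integral_superlevel {h : ℝ → ℝ} (hk : IntegrableOn k (Ioc a b))
    (hmono : MonotoneOn h (Ioc a b)) (hnonneg : ∀ u ∈ Ioc a b, 0 ≤ h u) :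
    ∫ u in Ioc a b, k u * h u =
      ∫ s in Ioc 0 (h b), ∫ u in Ioc a b, {v | s < h v}.indicator k u := by
  have hmeas : NullMeasurableSet {p : ℝ × ℝ | p.2 < h p.1}
      ((volume.restrict (Ioc a b)).prod (volume.restrict (Ioc 0 (h b)))) :=
    nullMeasurableSet_lt measurable_snd.aemeasurable
      (aemeasurable_restrict_of_monotoneOn measurableSet_Ioc hmono).comp_fst
  have hint : Integrable (Function.uncurry fun u s => {v | s < h v}.indicator k u)
      ((volume.restrict (Ioc a b)).prod (volume.restrict (Ioc 0 (h b)))) :=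
    (hk.comp_fst (volume.restrict (Ioc 0 (h b)))).indicator₀ hmeas
  rw [← integral_integral_swap hint]
  refine setIntegral_congr_fun measurableSet_Ioc fun u hu => ?_
  have hlayer : Ioc 0 (h b) ∩ Iio (h u) = Ioo 0 (h u) := by
    have hub : h u ≤ h b :=
      (le_norm_self _).trans (norm_le_of_monotoneOn_of_nonneg hmono hnonneg hu)
    ext s
    simp only [mem_inter_iff, mem_Ioc, mem_Iio, mem_Ioo]
    grind
  calc k u * h u
      = ∫ _ in Ioo 0 (h u), k u := by
        rw [setIntegral_const, volume_real_Ioo_of_le (hnonneg u hu), sub_zero, smul_eq_mul,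
          mul_comm]
    _ = ∫ s in Ioc 0 (h b), (Iio (h u)).indicator (fun _ => k u) s := by
        rw [setIntegral_indicator measurableSet_Iio, hlayer]

theorem abs_setIntegral_mul_le_of_monotoneOn {h : ℝ → ℝ} (hab : a < b)
    (hk : IntegrableOn k (Ioc a b)) (hC : ∀ c ∈ Icc a b, |∫ u in Ioc c b, k u| ≤ C)
    (hmono : MonotoneOn h (Ioc a b)) (hnonneg : ∀ u ∈ Ioc a b, 0 ≤ h u) :
    |∫ u in Ioc a b, k u * h u| ≤ C * h b := by
  have hsuper (s : ℝ) : ‖∫ u in Ioc a b, {v | s < h v}.indicator k u‖ ≤ C := by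
    have hmeas : NullMeasurableSet {v | s < h v} (volume.restrict (Ioc a b)) :=
      nullMeasurableSet_lt aemeasurable_const
        (aemeasurable_restrict_of_monotoneOn measurableSet_Ioc hmono)
    obtain ⟨c, hc, hae⟩ := exists_ae_eq_Ioc_of_upward_closed hab.le
      (inter_subset_left (s := Ioc a b) (t := {v | s < h v}))
      fun u hu v hv huv => ⟨hv, hu.2.trans_le (hmono hu.1 hv huv)⟩
    rw [integral_indicator₀ hmeas, Measure.restrict_restrict₀ hmeas, inter_comm,
      setIntegral_congr_set hae]
    exact hC c hc
  rw [setIntegral_mul_eq_integral_superlevel hk hmono hnonneg, ← norm_eq_abs]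
  refine (norm_setIntegral_le_of_norm_le_const measure_Ioc_lt_top fun s _ => hsuper s).trans_eq ?_
  rw [volume_real_Ioc_of_le (hnonneg b ⟨hab, le_rfl⟩), sub_zero]

theorem exists_monotoneOn_nonneg_sub_of_boundedVariationOn {h : ℝ → ℝ} (hab : a < b)
    (hbv : BoundedVariationOn h (Ioc a b)) (hlim : Tendsto h (𝓝[>] a) (𝓝 0)) :
    ∃ p q : ℝ → ℝ, MonotoneOn p (Ioc a b) ∧ MonotoneOn q (Ioc a b) ∧
      (∀ u ∈ Ioc a b, 0 ≤ p u) ∧ (∀ u ∈ Ioc a b, 0 ≤ q u) ∧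
      (∀ u, h u = p u - q u) ∧ p b + q b = (eVariationOn h (Ioc a b)).toReal := by
  have hb : b ∈ Ioc a b := ⟨hab, le_rfl⟩
  have hloc := hbv.locallyBoundedVariationOn
  -- `V u` is the variation of `h` on `(a, u]`.
  let V : ℝ → ℝ := fun u =>
    (eVariationOn h (Ioc a b)).toReal + variationOnFromTo h (Ioc a b) b u
  have hV_nonneg (u : ℝ) : 0 ≤ V u :=
    neg_le_iff_add_nonneg'.1 (neg_le_of_abs_le (variationOnFromTo.abs_le_eVariationOn hbv))
  have hV_sub {u v : ℝ} (hu : u ∈ Ioc a b) (hv : v ∈ Ioc a b) (huv : u ≤ v) :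
      |h v - h u| ≤ V v - V u := by
    simpa only [V, add_sub_add_left_eq_sub] using
      variationOnFromTo.abs_sub_le_sub_of_le hloc hb hu hv huv
  have hV_ge {u : ℝ} (hu : u ∈ Ioc a b) : |h u| ≤ V u := by
    have hlim_u : Tendsto (fun v => |h u - h v|) (𝓝[>] a) (𝓝 |h u|) := by
      simpa using (hlim.const_sub (h u)).abs
    refine le_of_tendsto hlim_u ?_
    filter_upwards [Ioo_mem_nhdsGT hu.1] with v hv
    exact (hV_sub ⟨hv.1, hv.2.le.trans hu.2⟩ hu hv.2.le).trans (sub_le_self _ (hV_nonneg v))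
  refine ⟨fun u => (V u + h u) / 2, fun u => (V u - h u) / 2, fun u hu v hv huv => ?_,
    fun u hu v hv huv => ?_, fun u hu => ?_, fun u hu => ?_, fun u => by ring, ?_⟩
  · linarith [neg_le_of_abs_le (hV_sub hu hv huv)]
  · linarith [le_of_abs_le (hV_sub hu hv huv)]
  · linarith [neg_le_of_abs_le (hV_ge hu)]
  · linarith [le_of_abs_le (hV_ge hu)]
  · simp only [V, variationOnFromTo.self]
    ring

theorem abs_setIntegral_mul_le_eVariationOn {h : ℝ → ℝ} (hab : a < b)
    (hk : IntegrableOn k (Ioc a b)) (hC : ∀ c ∈ Icc a b, |∫ u in Ioc c b, k u| ≤ C)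
    (hbv : BoundedVariationOn h (Ioc a b)) (hlim : Tendsto h (𝓝[>] a) (𝓝 0)) :
    |∫ u in Ioc a b, k u * h u| ≤ C * (eVariationOn h (Ioc a b)).toReal := by
  obtain ⟨p, q, hp, hq, hp0, hq0, hpq, hpqb⟩ :=
    exists_monotoneOn_nonneg_sub_of_boundedVariationOn hab hbv hlim
  calc |∫ u in Ioc a b, k u * h u|
      = |(∫ u in Ioc a b, k u * p u) - ∫ u in Ioc a b, k u * q u| := by
        simp only [hpq, mul_sub]
        rw [integral_sub (integrableOn_mul_of_monotoneOn hk hp hp0)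
          (integrableOn_mul_of_monotoneOn hk hq hq0)]
    _ ≤ |∫ u in Ioc a b, k u * p u| + |∫ u in Ioc a b, k u * q u| := abs_sub _ _
    _ ≤ C * p b + C * q b :=
        add_le_add (abs_setIntegral_mul_le_of_monotoneOn hab hk hC hp hp0)
          (abs_setIntegral_mul_le_of_monotoneOn hab hk hC hq hq0)
    _ = C * (eVariationOn h (Ioc a b)).toReal := by rw [← mul_add, hpqb]

theorem norm_setIntegral_smul_le_eVariationOn {E : Type*} [NormedAddCommGroup E] [NormedSpace ℝ E]
    {h : ℝ → E} (hab : a < b) (hk : IntegrableOn k (Ioc a b))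
    (hC : ∀ c ∈ Icc a b, |∫ u in Ioc c b, k u| ≤ C) (hbv : BoundedVariationOn h (Ioc a b))
    (hlim : Tendsto h (𝓝[>] a) (𝓝 0)) :
    ‖∫ u in Ioc a b, k u • h u‖ ≤ C * (eVariationOn h (Ioc a b)).toReal := by
  have hC0 : 0 ≤ C := (abs_nonneg _).trans (hC b (right_mem_Icc.2 hab.le))
  have hbound : 0 ≤ C * (eVariationOn h (Ioc a b)).toReal := by positivity
  by_cases hE : CompleteSpace E
  swap
  · simpa [integral, hE] using hbound
  by_cases hint : IntegrableOn (fun u => k u • h u) (Ioc a b)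
  swap
  · simpa [integral_undef hint] using hbound
  refine NormedSpace.norm_le_dual_bound ℝ _ hbound fun φ => ?_
  have hφ : eVariationOn (φ ∘ h) (Ioc a b) ≤ ‖φ‖₊ * eVariationOn h (Ioc a b) :=
    φ.lipschitz.lipschitzOnWith.comp_eVariationOn_le (mapsTo_univ _ _)
  have hφ_toReal : (eVariationOn (φ ∘ h) (Ioc a b)).toReal ≤
      ‖φ‖ * (eVariationOn h (Ioc a b)).toReal := by
    simpa using ENNReal.toReal_mono (ENNReal.mul_ne_top ENNReal.coe_ne_top hbv) hφ
  calc ‖φ (∫ u in Ioc a b, k u • h u)‖ = |∫ u in Ioc a b, k u * (φ ∘ h) u| := by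
        simp [← φ.integral_comp_comm hint, norm_eq_abs]
    _ ≤ C * (eVariationOn (φ ∘ h) (Ioc a b)).toReal :=
        abs_setIntegral_mul_le_eVariationOn hab hk hC (φ.lipschitz.comp_boundedVariationOn hbv)
          (by simpa using (φ.continuous.tendsto 0).comp hlim)
    _ ≤ C * (‖φ‖ * (eVariationOn h (Ioc a b)).toReal) := by gcongr
    _ = C * (eVariationOn h (Ioc a b)).toReal * ‖φ‖ := by ring

end SecondMeanValue

section DirichletKernel

/-- The Dirichlet kernel `sin (T u) / (π u)` of the real line, the convolution kernel of the
truncated Fourier inversion integral. It is written with `sinc` so that it takes the value `T / π`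
at `u = 0`. -/
noncomputable def dirichletKernel (T u : ℝ) : ℝ := T / π * sinc (T * u)

theorem dirichletKernel_neg (T u : ℝ) : dirichletKernel T (-u) = dirichletKernel T u := by
  simp only [dirichletKernel, mul_neg, sinc_neg]

theorem continuous_dirichletKernel (T : ℝ) : Continuous (dirichletKernel T) :=
  continuous_const.mul (continuous_sinc.comp (continuous_const_mul T))

theorem abs_dirichletKernel_le (T u : ℝ) : |dirichletKernel T u| ≤ |T / π| := by
  rw [dirichletKernel, abs_mul]
  exact mul_le_of_le_one_right (abs_nonneg _) (abs_sinc_le_one _)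

theorem dirichletKernel_eq_sin_mul_inv (T : ℝ) {u : ℝ} (hu : u ≠ 0) :
    dirichletKernel T u = π⁻¹ * (sin (T * u) * u⁻¹) := by
  rcases eq_or_ne T 0 with rfl | hT
  · simp [dirichletKernel]
  · rw [dirichletKernel, sinc_of_ne_zero (mul_ne_zero hT hu)]
    field_simp

theorem integral_dirichletKernel (T a b : ℝ) :
    ∫ u in a..b, dirichletKernel T u = π⁻¹ * ∫ v in (T * a)..(T * b), sinc v := by
  simp only [dirichletKernel]
  rw [intervalIntegral.integral_const_mul, div_eq_inv_mul, mul_assoc,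
    intervalIntegral.mul_integral_comp_mul_left]

theorem integral_cexp_eq_dirichletKernel (T u : ℝ) :
    ∫ s in (-T)..T, Complex.exp (Complex.I * u * s) = ((2 * π * dirichletKernel T u : ℝ) : ℂ) := by
  rcases eq_or_ne u 0 with rfl | hu
  · have hT : 2 * π * dirichletKernel T 0 = T + T := by
      rw [dirichletKernel, mul_zero, sinc_zero]
      field_simp
      ring
    simp [hT]
  · have hscale := intervalIntegral.smul_integral_comp_mul_left (a := -T) (b := T)
      (fun y : ℝ => Complex.exp (y * Complex.I)) u
    rw [mul_neg, integral_exp_mul_I_eq_sinc, mul_comm u, Complex.real_smul] at hscale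
    refine mul_left_cancel₀ (Complex.ofReal_ne_zero.2 hu) ?_
    calc (u : ℂ) * ∫ s in (-T)..T, Complex.exp (Complex.I * u * s)
        = u * ∫ s in (-T)..T, Complex.exp ((u * s : ℝ) * Complex.I) := by
          simp only [Complex.ofReal_mul, mul_comm Complex.I, mul_right_comm]
      _ = 2 * (T * u : ℝ) * sinc (T * u) := hscale
      _ = u * (2 * π * dirichletKernel T u : ℝ) := by
          rw [dirichletKernel]
          push_cast
          field_simp

variable {E : Type*} [NormedAddCommGroup E]

theorem integrable_dirichletKernel_smul [NormedSpace ℝ E] {μ : Measure ℝ} {g : ℝ → E}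
    (hg : Integrable g μ) (T : ℝ) : Integrable (fun u => dirichletKernel T u • g u) μ :=
  hg.bdd_smul |T / π| (continuous_dirichletKernel T).aestronglyMeasurable
    (ae_of_all _ (abs_dirichletKernel_le T))

theorem setIntegral_Ioi_dirichletKernel_smul [NormedSpace ℝ E] [CompleteSpace E] {g : ℝ → E}
    {η : ℝ} (hη : 0 ≤ η) (hg : IntegrableOn g (Ioi 0)) (L : E) (T : ℝ) :
    ∫ u in Ioi 0, dirichletKernel T u • g u =
      (∫ u in Ioc 0 η, dirichletKernel T u • (g u - L)) +
        (∫ u in Ioc 0 η, dirichletKernel T u) • L + ∫ u in Ioi η, dirichletKernel T u • g u := by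
  have hnear := integrable_dirichletKernel_smul (hg.mono_set (Ioc_subset_Ioi_self : Ioc 0 η ⊆ _)) T
  have hfar := integrable_dirichletKernel_smul (hg.mono_set (Ioi_subset_Ioi hη)) T
  have hconst : Integrable (fun u => dirichletKernel T u • L) (volume.restrict (Ioc 0 η)) :=
    integrable_dirichletKernel_smul (integrable_const L) T
  simp only [smul_sub]
  rw [integral_sub hnear hconst, integral_smul_const, sub_add_cancel,
    ← setIntegral_union (Ioc_disjoint_Ioi le_rfl) measurableSet_Ioi hnear hfar,
    Ioc_union_Ioi_eq_Ioi hη]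

variable [NormedSpace ℂ E]

theorem tendsto_integral_sin_smul_atTop {g : ℝ → E} (hg : Integrable g) :
    Tendsto (fun T : ℝ => ∫ u, sin (T * u) • g u) atTop (𝓝 0) := by
  have hexp := Real.tendsto_integral_exp_smul_cocompact g
  have hpos : Tendsto (fun T : ℝ => T / (2 * π)) atTop (cocompact ℝ) :=
    (tendsto_id.atTop_div_const (by positivity)).mono_right atTop_le_cocompact
  have hneg : Tendsto (fun T : ℝ => -(T / (2 * π))) atTop (cocompact ℝ) :=
    (tendsto_neg_atTop_atBot.comp (tendsto_id.atTop_div_const (by positivity))).mono_right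
      atBot_le_cocompact
  have hlim := ((hexp.comp hneg).sub (hexp.comp hpos)).const_smul (2 * Complex.I)⁻¹
  rw [sub_zero, smul_zero] at hlim
  refine hlim.congr fun T => ?_
  have hint (w : ℝ) : Integrable fun u : ℝ => fourierChar (-(u * w)) • g u := by
    simpa [mul_comm] using (Real.fourierIntegral_convergent_iff (μ := volume) w).2 hg
  have hchar (u w : ℝ) : (fourierChar (-(u * (w / (2 * π)))) : ℂ) =
      Complex.exp (-(u * w) * Complex.I) := by
    rw [Real.fourierChar_apply, show 2 * π * -(u * (w / (2 * π))) = -(u * w) by field_simp]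
    push_cast
    rfl
  have hsin (u : ℝ) : ((sin (T * u) : ℝ) : ℂ) = (2 * Complex.I)⁻¹ *
      (fourierChar (-(u * -(T / (2 * π)))) - fourierChar (-(u * (T / (2 * π))))) := by
    rw [← neg_div, hchar, hchar, Complex.ofReal_sin, Complex.sin, mul_inv, Complex.inv_I]
    push_cast
    ring_nf
  simp only [Function.comp_apply]
  rw [← integral_sub (hint _) (hint _), ← integral_smul]
  refine integral_congr_ae (ae_of_all _ fun u => ?_)
  simp only [← Complex.coe_smul, hsin, mul_smul, sub_smul, Circle.smul_def]

theorem tendsto_setIntegral_dirichletKernel_smul_zero {g : ℝ → E} {S : Set ℝ}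
    (hS : MeasurableSet S) (hg : IntegrableOn (fun u => u⁻¹ • g u) S) :
    Tendsto (fun T : ℝ => ∫ u in S, dirichletKernel T u • g u) atTop (𝓝 0) := by
  have hsin := (tendsto_integral_sin_smul_atTop (hg.integrable_indicator hS)).const_smul π⁻¹
  rw [smul_zero] at hsin
  refine hsin.congr fun T => ?_
  rw [← integral_indicator hS, ← integral_smul]
  refine integral_congr_ae ?_
  filter_upwards [compl_mem_ae_iff.2 (measure_singleton (μ := volume) (0 : ℝ))] with u hu
  by_cases huS : u ∈ S
  · simp only [indicator_of_mem huS, dirichletKernel_eq_sin_mul_inv T hu, smul_smul]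
  · simp [huS]

theorem tendsto_setIntegral_Ioi_dirichletKernel_smul_zero {g : ℝ → E} {δ : ℝ} (hδ : 0 < δ)
    (hg : IntegrableOn g (Ioi δ)) :
    Tendsto (fun T : ℝ => ∫ u in Ioi δ, dirichletKernel T u • g u) atTop (𝓝 0) := by
  refine tendsto_setIntegral_dirichletKernel_smul_zero measurableSet_Ioi ?_
  refine hg.bdd_smul (𝕜 := ℝ) δ⁻¹ measurable_inv.aestronglyMeasurable ?_
  filter_upwards [ae_restrict_mem measurableSet_Ioi] with u (hu : δ < u)
  rw [norm_of_nonneg (inv_nonneg.2 (hδ.trans hu).le)]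
  exact inv_anti₀ hδ hu.le

/-- The inversion integral `(2π)⁻¹ ∫_{-T}^T e^{ixs} f̂(s) ds`, where
`f̂(s) = ∫ e^{-ist} f(t) dt`. -/
noncomputable def partialFourierInversion (f : ℝ → E) (T x : ℝ) : E :=
  (1 / (2 * (π : ℂ))) • ∫ s in (-T)..T, Complex.exp (Complex.I * x * s) •
    ∫ t : ℝ, Complex.exp (-(Complex.I * s * t)) • f t

theorem integrable_cexp_smul_prod {f : ℝ → E} (hf : Integrable f) (x a b : ℝ) :
    Integrable (Function.uncurry fun s t : ℝ => Complex.exp (Complex.I * (x - t : ℝ) * s) • f t)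
      ((volume.restrict (uIoc a b)).prod volume) := by
  have : IsFiniteMeasure (volume.restrict (uIoc a b)) := ⟨by simp [uIoc]⟩
  refine (hf.comp_snd (volume.restrict (uIoc a b))).bdd_smul 1
    (Continuous.aestronglyMeasurable (by fun_prop)) (ae_of_all _ fun p => ?_)
  simp [Complex.norm_exp]

theorem partialFourierInversion_eq_integral [CompleteSpace E] {f : ℝ → E}
    (hf : Integrable f) (T x : ℝ) :
    partialFourierInversion f T x = ∫ u, dirichletKernel T u • f (x + u) := by
  have hmerge (s : ℝ) : Complex.exp (Complex.I * x * s) •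
        (∫ t : ℝ, Complex.exp (-(Complex.I * s * t)) • f t) =
      ∫ t : ℝ, Complex.exp (Complex.I * (x - t : ℝ) * s) • f t := by
    rw [← integral_smul]
    refine integral_congr_ae (ae_of_all _ fun t => ?_)
    simp only [smul_smul, ← Complex.exp_add]
    push_cast
    ring_nf
  simp_rw [partialFourierInversion, hmerge]
  rw [intervalIntegral_integral_swap (integrable_cexp_smul_prod hf x _ _), ← integral_smul,
    ← integral_add_left_eq_self _ x]
  refine integral_congr_ae (ae_of_all _ fun u => ?_)
  simp only
  rw [intervalIntegral.integral_smul_const, integral_cexp_eq_dirichletKernel, smul_smul,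
    ← Complex.coe_smul, sub_add_cancel_left, dirichletKernel_neg]
  congr 1
  push_cast
  field_simp

theorem partialFourierInversion_eq_add_setIntegral [CompleteSpace E] {f : ℝ → E}
    (hf : Integrable f) (T x : ℝ) :
    partialFourierInversion f T x = (∫ u in Ioi 0, dirichletKernel T u • f (x - u)) +
      ∫ u in Ioi 0, dirichletKernel T u • f (x + u) := by
  have hint := integrable_dirichletKernel_smul (hf.comp_add_left x) T
  have hreflect := integral_comp_neg_Ioi 0 fun u => dirichletKernel T u • f (x + u)
  simp only [dirichletKernel_neg, ← sub_eq_add_neg, neg_zero] at hreflect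
  rw [hreflect, intervalIntegral.integral_Iic_add_Ioi hint.integrableOn hint.integrableOn,
    partialFourierInversion_eq_integral hf]

end DirichletKernel

section DirichletIntegral

theorem integrableOn_inv_smul_sub {E : Type*} [NormedAddCommGroup E] [NormedSpace ℝ E] {g : ℝ → E}
    (hg : Continuous g) (hg0 : DifferentiableAt ℝ g 0) (δ : ℝ) :
    IntegrableOn (fun u => u⁻¹ • (g u - g 0)) (Ioc 0 δ) := by
  have hslope : ContinuousOn (dslope g 0) (Icc 0 δ) :=
    ((continuousOn_dslope univ_mem).2 ⟨hg.continuousOn, hg0⟩).mono (subset_univ _)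
  refine (hslope.integrableOn_Icc.mono_set Ioc_subset_Icc_self).congr_fun (fun u hu => ?_)
    measurableSet_Ioc
  simp only [dslope_of_ne g hu.1.ne', slope, sub_zero, vsub_eq_sub]

theorem integrable_cexp_neg_half_mul_sq :
    Integrable fun t : ℝ => Complex.exp (-(1 / 2) * (t : ℂ) ^ 2) :=
  integrable_cexp_neg_mul_sq (by norm_num)

theorem integral_cexp_neg_half_mul_sq :
    ∫ t : ℝ, Complex.exp (-(1 / 2) * (t : ℂ) ^ 2) = (2 * π : ℂ) ^ (1 / 2 : ℂ) := by
  rw [integral_gaussian_complex (by norm_num), one_div, div_inv_eq_mul, mul_comm]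

theorem fourierIntegral_cexp_neg_half_mul_sq (s : ℝ) :
    ∫ t : ℝ, Complex.exp (-(Complex.I * s * t)) * Complex.exp (-(1 / 2) * (t : ℂ) ^ 2) =
      (2 * π : ℂ) ^ (1 / 2 : ℂ) * Complex.exp (-(1 / 2) * (s : ℂ) ^ 2) := by
  have h := fourierIntegral_gaussian (b := 1 / 2) (by norm_num) (-s : ℂ)
  rw [show (π : ℂ) / (1 / 2) = 2 * π by ring,
    show -(-s : ℂ) ^ 2 / (4 * (1 / 2)) = -(1 / 2) * (s : ℂ) ^ 2 by ring] at h
  simpa only [mul_neg, neg_mul] using h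

theorem tendsto_partialFourierInversion_gaussian :
    Tendsto (fun T =>
      partialFourierInversion (fun t : ℝ => Complex.exp (-(1 / 2) * (t : ℂ) ^ 2)) T 0)
      atTop (𝓝 1) := by
  have hlim := ((intervalIntegral_tendsto_integral integrable_cexp_neg_half_mul_sq
    tendsto_neg_atTop_atBot tendsto_id).const_mul ((2 * π : ℂ) ^ (1 / 2 : ℂ))).const_mul
      (1 / (2 * π : ℂ))
  have hpi : (2 * π : ℂ) ≠ 0 := by simp [pi_ne_zero]
  rw [integral_cexp_neg_half_mul_sq, ← Complex.cpow_add _ _ hpi, add_halves, Complex.cpow_one,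
    one_div_mul_cancel hpi] at hlim
  refine hlim.congr fun T => ?_
  simp only [partialFourierInversion, smul_eq_mul, fourierIntegral_cexp_neg_half_mul_sq, id,
    Complex.ofReal_zero, mul_zero, zero_mul, Complex.exp_zero, one_mul,
    intervalIntegral.integral_const_mul]

theorem tendsto_setIntegral_Ioc_dirichletKernel_one :
    Tendsto (fun T => ∫ u in Ioc 0 1, dirichletKernel T u) atTop (𝓝 (1 / 2)) := by
  let g : ℝ → ℂ := fun t => Complex.exp (-(1 / 2) * (t : ℂ) ^ 2)
  have hg : Integrable g := integrable_cexp_neg_half_mul_sq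
  have hg0 : g 0 = 1 := by simp [g]
  have hdiff : Differentiable ℝ g := by fun_prop
  have hwhole : Tendsto (fun T => ∫ u in Ioi 0, dirichletKernel T u • g u) atTop (𝓝 (1 / 2)) := by
    refine (tendsto_partialFourierInversion_gaussian.div_const 2).congr fun T => ?_
    rw [partialFourierInversion_eq_add_setIntegral hg]
    simp [g]
  have hnear : Tendsto (fun T => ∫ u in Ioc 0 1, dirichletKernel T u • (g u - g 0)) atTop (𝓝 0) :=
    tendsto_setIntegral_dirichletKernel_smul_zero measurableSet_Ioc
      (integrableOn_inv_smul_sub hdiff.continuous hdiff.differentiableAt 1)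
  have hfar : Tendsto (fun T => ∫ u in Ioi 1, dirichletKernel T u • g u) atTop (𝓝 0) :=
    tendsto_setIntegral_Ioi_dirichletKernel_smul_zero one_pos hg.integrableOn
  have hlim := (Complex.continuous_re.tendsto _).comp ((hwhole.sub hnear).sub hfar)
  rw [sub_zero, sub_zero, show ((1 / 2 : ℂ)).re = 1 / 2 by norm_num] at hlim
  refine hlim.congr fun T => ?_
  rw [Function.comp_apply, setIntegral_Ioi_dirichletKernel_smul zero_le_one hg.integrableOn (g 0) T,
    hg0, add_assoc, add_sub_cancel_left, add_sub_cancel_right, Complex.real_smul, mul_one,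
    Complex.ofReal_re]

theorem tendsto_integral_sinc_atTop :
    Tendsto (fun y : ℝ => ∫ v in 0..y, sinc v) atTop (𝓝 (π / 2)) := by
  have hlim := tendsto_setIntegral_Ioc_dirichletKernel_one.const_mul π
  rw [mul_one_div] at hlim
  refine hlim.congr fun T => ?_
  rw [← intervalIntegral.integral_of_le zero_le_one, integral_dirichletKernel, mul_zero, mul_one,
    mul_inv_cancel_left₀ pi_ne_zero]

theorem tendsto_setIntegral_Ioc_dirichletKernel {δ : ℝ} (hδ : 0 < δ) :
    Tendsto (fun T => ∫ u in Ioc 0 δ, dirichletKernel T u) atTop (𝓝 (1 / 2)) := by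
  have hlim := (tendsto_integral_sinc_atTop.comp (tendsto_id.atTop_mul_const hδ)).const_mul π⁻¹
  rw [inv_mul_eq_div, div_right_comm, div_self pi_ne_zero] at hlim
  refine hlim.congr fun T => ?_
  rw [← intervalIntegral.integral_of_le hδ.le, integral_dirichletKernel, mul_zero]
  rfl

theorem exists_abs_integral_sinc_le : ∃ C, ∀ y : ℝ, 0 ≤ y → |∫ v in 0..y, sinc v| ≤ C := by
  have hcont : Continuous fun y : ℝ => ∫ v in 0..y, sinc v :=
    intervalIntegral.continuous_primitive (fun _ _ => continuous_sinc.intervalIntegrable _ _) 0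
  obtain ⟨N, hN⟩ := eventually_atTop.1
    (tendsto_integral_sinc_atTop.abs.eventually_le_const (lt_add_one |π / 2|))
  obtain ⟨B, hB⟩ :=
    (isCompact_Icc (a := 0) (b := N)).exists_bound_of_continuousOn hcont.continuousOn
  refine ⟨max B (|π / 2| + 1), fun y hy => ?_⟩
  rcases le_total y N with hyN | hNy
  · exact (hB y ⟨hy, hyN⟩).trans (le_max_left _ _)
  · exact (hN y hNy).trans (le_max_right _ _)

theorem exists_abs_setIntegral_dirichletKernel_le :
    ∃ C, ∀ T a b : ℝ, 0 ≤ T → 0 ≤ a → a ≤ b → |∫ u in Ioc a b, dirichletKernel T u| ≤ C := by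
  obtain ⟨C, hC⟩ := exists_abs_integral_sinc_le
  refine ⟨π⁻¹ * (C + C), fun T a b hT ha hab => ?_⟩
  rw [← intervalIntegral.integral_of_le hab, integral_dirichletKernel,
    ← intervalIntegral.integral_interval_sub_left (continuous_sinc.intervalIntegrable 0 _)
      (continuous_sinc.intervalIntegrable 0 _), abs_mul, abs_of_pos (inv_pos.2 pi_pos)]
  gcongr
  exact (abs_sub _ _).trans
    (add_le_add (hC _ (mul_nonneg hT (ha.trans hab))) (hC _ (mul_nonneg hT ha)))

end DirichletIntegral

section Jordan

variable {E : Type*} [NormedAddCommGroup E] [NormedSpace ℂ E]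

theorem exists_norm_setIntegral_dirichletKernel_smul_le {g : ℝ → E} {δ ε : ℝ} (hδ : 0 < δ)
    (hε : 0 < ε) (hbv : BoundedVariationOn g (Ioc 0 δ)) (hlim : Tendsto g (𝓝[>] 0) (𝓝 0)) :
    ∃ η ∈ Ioc 0 δ, ∀ T : ℝ, 0 ≤ T → ‖∫ u in Ioc 0 η, dirichletKernel T u • g u‖ ≤ ε := by
  obtain ⟨C, hC⟩ := exists_abs_setIntegral_dirichletKernel_le
  have hvar : Tendsto (fun η => C * (eVariationOn g (Ioc 0 η)).toReal) (𝓝[>] 0) (𝓝 0) := by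
    have hinter := ((ENNReal.tendsto_toReal ENNReal.zero_ne_top).comp
      (hbv.tendsto_eVariationOn_Ioc_zero 0)).const_mul C
    rw [nhdsWithin_Ioc_eq_nhdsGT hδ, ENNReal.toReal_zero, mul_zero] at hinter
    refine hinter.congr' ?_
    filter_upwards [Ioo_mem_nhdsGT hδ] with η hη
    rw [Function.comp_apply, inter_eq_right.2 (Ioc_subset_Ioc_right hη.2.le)]
  obtain ⟨η, hηε, hη⟩ := ((hvar.eventually_le_const hε).and (Ioc_mem_nhdsGT hδ)).exists
  refine ⟨η, hη, fun T hT => le_trans ?_ hηε⟩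
  exact norm_setIntegral_smul_le_eVariationOn hη.1
    (continuous_dirichletKernel T).integrableOn_Ioc (fun c hc => hC T c η hT hc.1 hc.2)
    (hbv.mono (Ioc_subset_Ioc_right hη.2)) hlim

theorem tendsto_setIntegral_Ioi_dirichletKernel_smul [CompleteSpace E] {g : ℝ → E} {L : E} {δ : ℝ}
    (hδ : 0 < δ) (hg : IntegrableOn g (Ioi 0)) (hbv : BoundedVariationOn g (Ioc 0 δ))
    (hlim : Tendsto g (𝓝[>] 0) (𝓝 L)) :
    Tendsto (fun T => ∫ u in Ioi 0, dirichletKernel T u • g u) atTop (𝓝 ((2⁻¹ : ℝ) • L)) := by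
  refine Metric.tendsto_nhds.2 fun ε hε => ?_
  obtain ⟨η, hη, hsmall⟩ := exists_norm_setIntegral_dirichletKernel_smul_le (g := fun u => g u - L)
    hδ (half_pos hε) ((IsometryEquiv.subRight L).isometry.lipschitz.comp_boundedVariationOn hbv)
    (by simpa using hlim.sub_const L)
  have hrest : Tendsto (fun T => (∫ u in Ioc 0 η, dirichletKernel T u) • L +
      ∫ u in Ioi η, dirichletKernel T u • g u) atTop (𝓝 ((2⁻¹ : ℝ) • L)) := by
    simpa using ((tendsto_setIntegral_Ioc_dirichletKernel hη.1).smul_const L).add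
      (tendsto_setIntegral_Ioi_dirichletKernel_smul_zero hη.1
        (hg.mono_set (Ioi_subset_Ioi hη.1.le)))
  filter_upwards [Metric.tendsto_nhds.1 hrest _ (half_pos hε), eventually_ge_atTop 0] with T hT hT0
  rw [dist_eq_norm] at hT ⊢
  rw [setIntegral_Ioi_dirichletKernel_smul hη.1.le hg L, add_assoc, add_sub_assoc]
  exact (norm_add_le _ _).trans_lt
    ((add_lt_add_of_le_of_lt (hsmall T hT0) hT).trans_eq (add_halves ε))

theorem jordan_fourier_inversion_general [CompleteSpace E] {f : ℝ → E} (hf : Integrable f) {x : ℝ}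
    {s : Set ℝ} (hs : s ∈ 𝓝 x) (hbv : BoundedVariationOn f s) {fl fr : E}
    (hfl : Tendsto f (𝓝[<] x) (𝓝 fl)) (hfr : Tendsto f (𝓝[>] x) (𝓝 fr)) :
    Tendsto (fun T => partialFourierInversion f T x) atTop (𝓝 ((2⁻¹ : ℝ) • (fl + fr))) := by
  obtain ⟨δ, hδ, hδs⟩ := Metric.nhds_basis_closedBall.mem_iff.1 hs
  rw [Real.closedBall_eq_Icc] at hδs
  have hleft : Tendsto (fun T => ∫ u in Ioi 0, dirichletKernel T u • f (x - u)) atTop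
      (𝓝 ((2⁻¹ : ℝ) • fl)) := by
    refine tendsto_setIntegral_Ioi_dirichletKernel_smul hδ (hf.comp_sub_left x).integrableOn
      (ne_top_of_le_ne_top hbv (eVariationOn.comp_le_of_antitoneOn f (x - ·)
        (fun _ _ _ _ huv => sub_le_sub_left huv x) fun u hu => hδs ?_)) (hfl.comp ?_)
    · exact ⟨by linarith [hu.2], by linarith [hu.1]⟩
    · simpa only [sub_zero] using
        (continuous_sub_left x).continuousWithinAt.tendsto_nhdsWithin (s := Ioi 0)
          (x := 0) (t := Iio x) fun _ => sub_lt_self x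
  have hright : Tendsto (fun T => ∫ u in Ioi 0, dirichletKernel T u • f (x + u)) atTop
      (𝓝 ((2⁻¹ : ℝ) • fr)) := by
    refine tendsto_setIntegral_Ioi_dirichletKernel_smul hδ (hf.comp_add_left x).integrableOn
      (ne_top_of_le_ne_top hbv (eVariationOn.comp_le_of_monotoneOn f (x + ·)
        (fun _ _ _ _ huv => add_le_add_right huv x) fun u hu => hδs ?_)) (hfr.comp ?_)
    · exact ⟨by linarith [hu.1], by linarith [hu.2]⟩
    · exact (map_add_left_nhdsGT.trans (by rw [add_zero])).le
  simpa only [partialFourierInversion_eq_add_setIntegral hf, smul_add] using hleft.add hright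

end Jordan

/-- Jordan's Fourier inversion theorem: if `f : ℝ → ℝ` is Lebesgue integrable and of
bounded variation on all of `ℝ`, then at each point `x` the symmetric partial inverse
Fourier integrals converge to the average of the one-sided limits of `f` at `x`. -/
theorem jordan_fourier_inversion (f : ℝ → ℝ)
    (hf : MeasureTheory.Integrable f)
    (hbv : BoundedVariationOn f Set.univ)
    (x fl fr : ℝ)
    (hfl : Filter.Tendsto f (nhdsWithin x (Set.Iio x)) (nhds fl))
    (hfr : Filter.Tendsto f (nhdsWithin x (Set.Ioi x)) (nhds fr)) :
    Filter.Tendsto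
      (fun T : ℝ => (1 / (2 * (Real.pi : ℂ))) *
        ∫ s in (-T)..T, Complex.exp (Complex.I * x * s) *
          (∫ t : ℝ, Complex.exp (-(Complex.I * s * t)) * ((f t : ℝ) : ℂ)))
      Filter.atTop
      (nhds (((fl + fr) / 2 : ℝ) : ℂ)) := by
  have hlim := jordan_fourier_inversion_general hf.ofReal univ_mem
    (Complex.isometry_ofReal.lipschitz.comp_boundedVariationOn hbv)
    ((Complex.continuous_ofReal.tendsto fl).comp hfl)
    ((Complex.continuous_ofReal.tendsto fr).comp hfr)
  simpa [partialFourierInversion, div_eq_inv_mul, mul_add] using hlim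
end

section
/- (Pringsheim's inversion theorem.) Let f : ℝ → ℝ be of bounded variation on ℝ (finite total variation over ℝ) with lim_{|x|→∞} f(x) = 0, and for s ≠ 0 let f̂(s) = lim_{X→−∞, Y→∞} ∫_X^Y e^{-ist} f(t) dt, which exists. Then for each x ∈ ℝ, (f(x−)+f(x+))/2 = (1/(2π)) · lim_{T→∞, S→0⁺} ∫_{S<|s|<T} e^{ixs} f̂(s) ds, where the double limit means: for every ε > 0 there exist M > 0 and η > 0 such that the integral over {s : S < |s| < T} is within ε of the left-hand side (times 2π) whenever T > M and 0 < S < η. -/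
/-!
The bounded variation of `f` makes `df` a finite complex measure with `f(t) = df((-∞, t])` for
almost every `t`, and integrating by parts gives `f̂(s) = (is)⁻¹ ∫ e^{-isu} df(u)`. By Fubini, the
truncated inversion integral is then `∫ 2 (Si(T(x - u)) - Si(S(x - u))) df(u)`, where `Si` is the
sine integral. As `Si` is bounded, `Si(0) = 0` and `Si(±∞) = ±π/2`, dominated convergence yields the
limit `π ∫ sign(x - u) df(u) = π (f(x-) + f(x+))`, the last step because `df` has total mass `0`.
-/

open Filter MeasureTheory Set Topology
open Complex (I)

lemma integral_sin_mul_exp_neg_mul (R y : ℝ) :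
    ∫ x in (0 : ℝ)..R, Real.sin x * Real.exp (-(x * y)) =
      (1 + y ^ 2)⁻¹ - Real.exp (-(R * y)) * (Real.cos R + y * Real.sin R) * (1 + y ^ 2)⁻¹ := by
  have hderiv (x : ℝ) : HasDerivAt
      (fun x : ℝ => -(Real.exp (-(x * y)) * (Real.cos x + y * Real.sin x) * (1 + y ^ 2)⁻¹))
      (Real.sin x * Real.exp (-(x * y))) x := by
    have hexp : HasDerivAt (fun x : ℝ => Real.exp (-(x * y)))
        (Real.exp (-(x * y)) * -(1 * y)) x :=
      (((hasDerivAt_id x).mul_const y).neg).exp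
    have htrig : HasDerivAt (fun x : ℝ => Real.cos x + y * Real.sin x)
        (-Real.sin x + y * Real.cos x) x :=
      (Real.hasDerivAt_cos x).add ((Real.hasDerivAt_sin x).const_mul y)
    refine ((hexp.mul htrig).mul_const (1 + y ^ 2)⁻¹).neg.congr_deriv ?_
    field_simp
    ring
  rw [intervalIntegral.integral_eq_sub_of_hasDerivAt (fun x _ => hderiv x)
    (Continuous.intervalIntegrable (by fun_prop) _ _)]
  simp only [zero_mul, neg_zero, Real.exp_zero, Real.cos_zero, Real.sin_zero, mul_zero, add_zero,
    one_mul, mul_one]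
  ring

lemma integrableOn_Ioi_exp_neg_mul {R : ℝ} (hR : 0 < R) :
    IntegrableOn (fun y : ℝ => Real.exp (-(R * y))) (Ioi 0) := by
  simpa using integrableOn_exp_mul_Ioi (neg_lt_zero.2 hR) 0

lemma integral_Ioi_exp_neg_mul {R : ℝ} (hR : 0 < R) :
    ∫ y in Ioi (0 : ℝ), Real.exp (-(R * y)) = R⁻¹ := by
  simpa using integral_exp_mul_Ioi (neg_lt_zero.2 hR) 0

lemma integral_Ioi_sin_mul_exp_neg_mul {x : ℝ} (hx : 0 < x) :
    ∫ y in Ioi (0 : ℝ), Real.sin x * Real.exp (-(x * y)) = Real.sinc x := by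
  rw [integral_const_mul, integral_Ioi_exp_neg_mul hx, Real.sinc_of_ne_zero hx.ne', div_eq_mul_inv]

lemma integrable_sin_mul_exp_neg_mul_prod (R : ℝ) :
    Integrable (Function.uncurry fun x y : ℝ => Real.sin x * Real.exp (-(x * y)))
      ((volume.restrict (Ioc 0 R)).prod (volume.restrict (Ioi 0))) := by
  rw [integrable_prod_iff (Continuous.aestronglyMeasurable (by fun_prop))]
  constructor
  · filter_upwards [ae_restrict_mem measurableSet_Ioc] with x hx
    exact (integrableOn_Ioi_exp_neg_mul hx.1).const_mul (Real.sin x)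
  · have hsinc : IntegrableOn (fun x => |Real.sinc x|) (Ioc 0 R) :=
      Real.continuous_sinc.abs.integrableOn_Ioc
    refine hsinc.congr ?_
    filter_upwards [ae_restrict_mem measurableSet_Ioc] with x hx
    simp only [Function.uncurry, norm_mul, Real.norm_eq_abs, Real.abs_exp]
    rw [integral_const_mul, integral_Ioi_exp_neg_mul hx.1, Real.sinc_of_ne_zero hx.1.ne', abs_div,
      abs_of_pos hx.1, div_eq_mul_inv]

lemma abs_cos_add_mul_sin_mul_inv_le_one (R y : ℝ) :
    |(Real.cos R + y * Real.sin R) * (1 + y ^ 2)⁻¹| ≤ 1 := by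
  have hpos : 0 < 1 + y ^ 2 := by positivity
  have hsq : (Real.cos R + y * Real.sin R) ^ 2 ≤ 1 + y ^ 2 := by
    nlinarith [sq_nonneg (y * Real.cos R - Real.sin R), Real.sin_sq_add_cos_sq R]
  rw [← div_eq_mul_inv, abs_div, abs_of_pos hpos, div_le_one hpos]
  exact abs_le_of_sq_le_sq (by nlinarith [sq_nonneg y]) hpos.le

lemma abs_exp_mul_cos_add_mul_sin_le (R y : ℝ) :
    |Real.exp (-(R * y)) * (Real.cos R + y * Real.sin R) * (1 + y ^ 2)⁻¹| ≤
      Real.exp (-(R * y)) := by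
  rw [mul_assoc, abs_mul, Real.abs_exp]
  exact mul_le_of_le_one_right (Real.exp_pos _).le (abs_cos_add_mul_sin_mul_inv_le_one R y)

/-- The sine integral `Si x = ∫₀ˣ (sin t) / t dt`, through which the truncated Fourier inversion
integral is expressed. -/
noncomputable def sineIntegral (x : ℝ) : ℝ :=
  ∫ t in (0 : ℝ)..x, Real.sinc t

namespace sineIntegral

@[simp]
lemma zero : sineIntegral 0 = 0 :=
  intervalIntegral.integral_same

lemma neg (x : ℝ) : sineIntegral (-x) = -sineIntegral x := by
  have h := intervalIntegral.integral_comp_neg (a := 0) (b := x) Real.sinc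
  simp only [Real.sinc_neg, neg_zero] at h
  rw [sineIntegral, sineIntegral, h, intervalIntegral.integral_symm]

@[fun_prop]
lemma continuous : Continuous sineIntegral :=
  intervalIntegral.continuous_primitive Real.continuous_sinc.intervalIntegrable 0

lemma eq_pi_div_two_sub {R : ℝ} (hR : 0 < R) :
    sineIntegral R = Real.pi / 2 - ∫ y in Ioi (0 : ℝ),
      Real.exp (-(R * y)) * (Real.cos R + y * Real.sin R) * (1 + y ^ 2)⁻¹ := by
  have hinv : IntegrableOn (fun y : ℝ => (1 + y ^ 2)⁻¹) (Ioi 0) :=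
    integrable_inv_one_add_sq.integrableOn
  have hrem : IntegrableOn (fun y : ℝ =>
      Real.exp (-(R * y)) * (Real.cos R + y * Real.sin R) * (1 + y ^ 2)⁻¹) (Ioi 0) :=
    (integrableOn_Ioi_exp_neg_mul hR).mono' (Measurable.aestronglyMeasurable (by fun_prop))
      (ae_of_all _ (abs_exp_mul_cos_add_mul_sin_le R))
  have hint := integrable_sin_mul_exp_neg_mul_prod R
  rw [← uIoc_of_le hR.le] at hint
  calc sineIntegral R
      = ∫ x in (0 : ℝ)..R, ∫ y in Ioi (0 : ℝ), Real.sin x * Real.exp (-(x * y)) := by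
        refine intervalIntegral.integral_congr_ae (ae_of_all _ fun x hx => ?_)
        rw [uIoc_of_le hR.le] at hx
        exact (integral_Ioi_sin_mul_exp_neg_mul hx.1).symm
    _ = ∫ y in Ioi (0 : ℝ), ∫ x in (0 : ℝ)..R, Real.sin x * Real.exp (-(x * y)) :=
        intervalIntegral_integral_swap hint
    _ = _ := by
        simp_rw [integral_sin_mul_exp_neg_mul]
        rw [integral_sub hinv hrem, integral_Ioi_inv_one_add_sq, Real.arctan_zero, sub_zero]

lemma abs_sub_pi_div_two_le {R : ℝ} (hR : 0 < R) : |sineIntegral R - Real.pi / 2| ≤ R⁻¹ := by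
  rw [eq_pi_div_two_sub hR, sub_sub_cancel_left, abs_neg, ← Real.norm_eq_abs,
    ← integral_Ioi_exp_neg_mul hR]
  exact norm_integral_le_of_norm_le (integrableOn_Ioi_exp_neg_mul hR)
    (ae_of_all _ (abs_exp_mul_cos_add_mul_sin_le R))

lemma tendsto_atTop : Tendsto sineIntegral atTop (𝓝 (Real.pi / 2)) := by
  rw [tendsto_iff_norm_sub_tendsto_zero]
  refine squeeze_zero' (Eventually.of_forall fun _ => norm_nonneg _) ?_ tendsto_inv_atTop_zero
  filter_upwards [eventually_gt_atTop 0] with R hR using abs_sub_pi_div_two_le hR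

lemma tendsto_atBot : Tendsto sineIntegral atBot (𝓝 (-(Real.pi / 2))) :=
  (tendsto_atTop.comp tendsto_neg_atBot_atTop).neg.congr fun R => by simp [neg]

lemma tendsto_mul_const_atTop (c : ℝ) :
    Tendsto (fun T : ℝ => sineIntegral (T * c)) atTop
      (𝓝 (Real.pi / 2 * (SignType.sign c : ℝ))) := by
  rcases lt_trichotomy c 0 with hc | rfl | hc
  · simpa [sign_neg hc, Function.comp_def] using
      tendsto_atBot.comp (tendsto_id.atTop_mul_const_of_neg hc)
  · simp
  · simpa [sign_pos hc, Function.comp_def] using tendsto_atTop.comp (tendsto_id.atTop_mul_const hc)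

lemma abs_le (x : ℝ) : |sineIntegral x| ≤ Real.pi / 2 + 1 := by
  wlog hx : 0 ≤ x generalizing x
  · simpa [neg] using this (-x) (by linarith)
  have hpi := Real.pi_pos
  rcases le_or_gt x 1 with hx1 | hx1
  · have h := intervalIntegral.norm_integral_le_of_norm_le_const (a := 0) (b := x) (C := 1)
      (f := Real.sinc) fun t _ => Real.abs_sinc_le_one t
    rw [sub_zero, abs_of_nonneg hx, one_mul] at h
    exact h.trans (by linarith)
  · have h : |sineIntegral x - Real.pi / 2| ≤ 1 :=
      (abs_sub_pi_div_two_le (by linarith)).trans (inv_le_one_of_one_le₀ hx1.le)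
    calc |sineIntegral x| = |Real.pi / 2 + (sineIntegral x - Real.pi / 2)| := by ring_nf
      _ ≤ |Real.pi / 2| + |sineIntegral x - Real.pi / 2| := abs_add_le _ _
      _ ≤ Real.pi / 2 + 1 := by rw [abs_of_pos (by positivity)]; gcongr

lemma integral_mul_sinc_mul (c S T : ℝ) :
    ∫ s in S..T, c * Real.sinc (s * c) = sineIntegral (T * c) - sineIntegral (S * c) := by
  have hint := Real.continuous_sinc.intervalIntegrable (μ := volume)
  rw [intervalIntegral.integral_const_mul, intervalIntegral.mul_integral_comp_mul_right,
    sineIntegral, sineIntegral,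
    intervalIntegral.integral_interval_sub_left (hint _ _) (hint _ _)]

end sineIntegral

section IntegrationByParts

variable {E : Type*} [NormedAddCommGroup E] [NormedSpace ℂ E] [CompleteSpace E]
  {μ : Measure ℝ} [SFinite μ] {w : ℝ → E} {a b : ℝ}

lemma integral_smul_setIntegral_Iic {k : ℝ → ℂ} (hab : a ≤ b)
    (hk : IntervalIntegrable k volume a b) (hw : Integrable w μ) :
    ∫ t in a..b, k t • ∫ u in Iic t, w u ∂μ =
      ∫ u in Iic b, (∫ t in max a u..b, k t) • w u ∂μ := by
  have hint : Integrable (Function.uncurry fun t u => (Ici u).indicator k t • w u)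
      ((volume.restrict (uIoc a b)).prod μ) := by
    rw [uIoc_of_le hab]
    refine (((intervalIntegrable_iff_integrableOn_Ioc_of_le hab).1 hk).smul_prod hw).indicator
      (measurableSet_le measurable_snd measurable_fst) |>.congr (ae_of_all _ fun p => ?_)
    simp [indicator, Function.uncurry]
  have hinner (t : ℝ) :
      k t • ∫ u in Iic t, w u ∂μ = ∫ u, (Ici u).indicator k t • w u ∂μ := by
    rw [← integral_smul, ← integral_indicator measurableSet_Iic]
    congr 1 with u
    simp [indicator]
  have houter (u : ℝ) : ∫ t in a..b, (Ici u).indicator k t • w u =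
      (Iic b).indicator (fun u => (∫ t in max a u..b, k t) • w u) u := by
    have hae : (Ioc a b ∩ Ici u : Set ℝ) =ᵐ[volume] (Ioc a b ∩ Ioi u : Set ℝ) :=
      (ae_eq_refl _).inter Ioi_ae_eq_Ici.symm
    rw [intervalIntegral.integral_smul_const, intervalIntegral.integral_of_le hab,
      setIntegral_indicator measurableSet_Ici, setIntegral_congr_set hae, Ioc_inter_Ioi]
    by_cases hu : u ≤ b
    · rw [indicator_of_mem (mem_Iic.2 hu), intervalIntegral.integral_of_le (max_le hab hu)]
    · rw [indicator_of_notMem (by simpa using hu), Ioc_eq_empty (by grind), setIntegral_empty,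
        zero_smul]
  simp_rw [hinner]
  rw [intervalIntegral_integral_swap hint, ← integral_indicator measurableSet_Iic]
  simp_rw [houter]

lemma integral_deriv_smul_setIntegral_Iic {φ φ' : ℝ → ℂ} (hφ : ∀ t, HasDerivAt φ (φ' t) t)
    (hφ' : Continuous φ') (hw : Integrable w μ) (hab : a ≤ b) :
    ∫ t in a..b, φ' t • ∫ u in Iic t, w u ∂μ =
      φ b • (∫ u in Iic b, w u ∂μ) - φ a • (∫ u in Iic a, w u ∂μ) -
        ∫ u in a..b, φ u • w u ∂μ := by
  have hint (u v : ℝ) : IntervalIntegrable φ' volume u v := hφ'.intervalIntegrable u v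
  have hFTC (u v : ℝ) : ∫ t in u..v, φ' t = φ v - φ u :=
    intervalIntegral.integral_eq_sub_of_hasDerivAt (fun t _ => hφ t) (hint u v)
  have hIic : EqOn (fun u => φ (max a u) • w u) (fun u => φ a • w u) (Iic a) := fun u hu => by
    simp only [max_eq_left (mem_Iic.1 hu)]
  have hIoc : EqOn (fun u => φ (max a u) • w u) (fun u => φ u • w u) (Ioc a b) := fun u hu => by
    simp only [max_eq_right hu.1.le]
  have hφw : IntegrableOn (fun u => φ u • w u) (Ioc a b) μ :=
    (hw.integrableOn.continuousOn_smul (fun t _ => (hφ t).continuousAt.continuousWithinAt)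
      isCompact_Icc).mono_set Ioc_subset_Icc_self
  have hintIic : IntegrableOn (fun u => φ (max a u) • w u) (Iic a) μ :=
    IntegrableOn.congr_fun (hw.integrableOn.fun_smul (φ a)) hIic.symm measurableSet_Iic
  have hintIic' : IntegrableOn (fun u => φ (max a u) • w u) (Iic b) μ := by
    rw [← Iic_union_Ioc_eq_Iic hab]
    exact hintIic.union (hφw.congr_fun hIoc.symm measurableSet_Ioc)
  have hmax : ∫ u in Iic b, φ (max a u) • w u ∂μ =
      φ a • (∫ u in Iic a, w u ∂μ) + ∫ u in a..b, φ u • w u ∂μ := by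
    rw [← sub_eq_iff_eq_add']
    conv_lhs => rw [← integral_smul, ← setIntegral_congr_fun measurableSet_Iic hIic]
    rw [intervalIntegral.integral_Iic_sub_Iic hintIic hintIic',
      intervalIntegral.integral_of_le hab, intervalIntegral.integral_of_le hab]
    exact setIntegral_congr_fun measurableSet_Ioc hIoc
  rw [integral_smul_setIntegral_Iic hab (hint a b) hw]
  simp_rw [hFTC, sub_smul]
  rw [integral_sub (hw.integrableOn.fun_smul (φ b)) hintIic', integral_smul, hmax, sub_sub]

end IntegrationByParts

section FourierStieltjes

variable {E : Type*} [NormedAddCommGroup E] [NormedSpace ℂ E] {μ : Measure ℝ} {w : ℝ → E}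

/-- The Fourier–Stieltjes transform `∫ e^{-isu} dg(u)` of the vector measure `dg = w dμ`, encoded
by a positive measure `μ` and a density `w`. -/
noncomputable def fourierStieltjes (μ : Measure ℝ) (w : ℝ → E) (s : ℝ) : E :=
  ∫ u : ℝ, Complex.exp (-(I * s * u)) • w u ∂μ

lemma norm_exp_neg_I_mul (s t : ℝ) : ‖Complex.exp (-(I * s * t))‖ = 1 := by
  rw [show -(I * s * t) = ((-(s * t) : ℝ) : ℂ) * I by push_cast; ring]
  exact Complex.norm_exp_ofReal_mul_I _

lemma integrable_exp_neg_I_mul_smul (hw : Integrable w μ) (s : ℝ) :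
    Integrable (fun u : ℝ => Complex.exp (-(I * s * u)) • w u) μ :=
  hw.bdd_smul 1 (Continuous.aestronglyMeasurable (by fun_prop))
    (ae_of_all _ fun u => (norm_exp_neg_I_mul s u).le)

lemma hasDerivAt_exp_neg_I_mul_div {s : ℝ} (hs : s ≠ 0) (t : ℝ) :
    HasDerivAt (fun t : ℝ => -(I * s)⁻¹ * Complex.exp (-(I * s * t)))
      (Complex.exp (-(I * s * t))) t := by
  have hIs : I * s ≠ 0 := by simp [hs]
  have hlin : HasDerivAt (fun t : ℝ => -(I * s * t)) (-(I * s)) t := by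
    simpa using ((hasDerivAt_id t).ofReal_comp.const_mul (I * s)).fun_neg
  refine (hlin.cexp.const_mul (-(I * s)⁻¹)).congr_deriv ?_
  rw [mul_neg, neg_mul_neg, mul_left_comm, inv_mul_cancel₀ hIs, mul_one]

lemma tendsto_exp_smul_nhds_zero {l : Filter ℝ} {G : ℝ → E} (hG : Tendsto G l (𝓝 0)) (c : ℂ)
    (s : ℝ) : Tendsto (fun t : ℝ => (c * Complex.exp (-(I * s * t))) • G t) l (𝓝 0) := by
  rw [tendsto_zero_iff_norm_tendsto_zero]
  simpa only [norm_smul, norm_mul, norm_exp_neg_I_mul, mul_one, norm_zero, mul_zero]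
    using hG.norm.const_mul ‖c‖

lemma tendsto_setIntegral_Iic_atBot (hw : Integrable w μ) :
    Tendsto (fun t => ∫ u in Iic t, w u ∂μ) atBot (𝓝 0) := by
  have hIoi := (aecover_Ioi (μ := μ) tendsto_id).integral_tendsto_of_countably_generated hw
  have hsub := hIoi.const_sub (∫ u, w u ∂μ)
  rw [sub_self] at hsub
  refine hsub.congr fun t => ?_
  rw [sub_eq_iff_eq_add, ← compl_Iic, id, integral_add_compl measurableSet_Iic hw]

lemma tendsto_setIntegral_Iic_atTop (hw : Integrable w μ) :
    Tendsto (fun t => ∫ u in Iic t, w u ∂μ) atTop (𝓝 (∫ u, w u ∂μ)) :=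
  (aecover_Iic tendsto_id).integral_tendsto_of_countably_generated hw

lemma tendsto_integral_exp_smul_setIntegral_Iic [CompleteSpace E] [SFinite μ]
    (hw : Integrable w μ) (hw0 : ∫ u, w u ∂μ = 0) {s : ℝ} (hs : s ≠ 0) :
    Tendsto (fun P : ℝ × ℝ =>
        ∫ t in P.1..P.2, Complex.exp (-(I * s * t)) • ∫ u in Iic t, w u ∂μ)
      (atBot ×ˢ atTop) (𝓝 ((I * s)⁻¹ • fourierStieltjes μ w s)) := by
  have htop : Tendsto (fun t => ∫ u in Iic t, w u ∂μ) atTop (𝓝 0) :=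
    hw0 ▸ tendsto_setIntegral_Iic_atTop hw
  have hboundary := ((tendsto_exp_smul_nhds_zero htop (-(I * s)⁻¹) s).comp
    (tendsto_snd (f := atBot))).sub ((tendsto_exp_smul_nhds_zero
      (tendsto_setIntegral_Iic_atBot hw) (-(I * s)⁻¹) s).comp (tendsto_fst (g := atTop)))
  have hmain : Tendsto (fun P : ℝ × ℝ => ∫ u in P.1..P.2, Complex.exp (-(I * s * u)) • w u ∂μ)
      (atBot ×ˢ atTop) (𝓝 (fourierStieltjes μ w s)) :=
    intervalIntegral_tendsto_integral (integrable_exp_neg_I_mul_smul hw s) tendsto_fst tendsto_snd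
  have hlim := hboundary.add (hmain.const_smul (I * s)⁻¹)
  rw [sub_zero, zero_add] at hlim
  refine hlim.congr' ?_
  filter_upwards [(eventually_le_atBot (0 : ℝ)).prod_mk (eventually_ge_atTop (0 : ℝ))] with P hP
  rw [integral_deriv_smul_setIntegral_Iic (hasDerivAt_exp_neg_I_mul_div hs) (by fun_prop) hw
    (hP.1.trans hP.2)]
  simp only [Function.comp_apply, mul_smul, intervalIntegral.integral_smul, neg_smul,
    sub_neg_eq_add, intervalIntegral.integral_neg]

lemma integrable_mul_exp_smul_prod {k : ℝ → ℂ} {a b : ℝ}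
    (hk : IntervalIntegrable k volume a b) (hw : Integrable w μ) :
    Integrable (Function.uncurry fun s u : ℝ => (k s * Complex.exp (-(I * s * u))) • w u)
      ((volume.restrict (uIoc a b)).prod μ) := by
  have hprod : Integrable (fun p : ℝ × ℝ => k p.1 • w p.2)
      ((volume.restrict (uIoc a b)).prod μ) :=
    (intervalIntegrable_iff.1 hk).smul_prod hw
  refine (hprod.bdd_smul (φ := fun p : ℝ × ℝ => Complex.exp (-(I * p.1 * p.2))) 1
    (Continuous.aestronglyMeasurable (by fun_prop))
    (ae_of_all _ fun p => (norm_exp_neg_I_mul p.1 p.2).le)).congr (ae_of_all _ fun p => ?_)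
  simp only [Function.uncurry, Pi.smul_apply', smul_smul, mul_comm (k p.1)]

lemma integrable_intervalIntegral_mul_exp_smul [CompleteSpace E] [SFinite μ] {k : ℝ → ℂ} {a b : ℝ}
    (hk : IntervalIntegrable k volume a b) (hw : Integrable w μ) :
    Integrable (fun u : ℝ => (∫ s in a..b, k s * Complex.exp (-(I * s * u))) • w u) μ := by
  simp_rw [← intervalIntegral.integral_smul_const,
    intervalIntegral.intervalIntegral_eq_integral_uIoc]
  exact (integrable_mul_exp_smul_prod hk hw).integral_prod_right.smul _

lemma intervalIntegral_smul_fourierStieltjes [CompleteSpace E] [SFinite μ] {k : ℝ → ℂ} {a b : ℝ}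
    (hk : IntervalIntegrable k volume a b) (hw : Integrable w μ) :
    ∫ s in a..b, k s • fourierStieltjes μ w s =
      ∫ u, (∫ s in a..b, k s * Complex.exp (-(I * s * u))) • w u ∂μ := by
  calc ∫ s in a..b, k s • fourierStieltjes μ w s
      = ∫ s in a..b, ∫ u, (k s * Complex.exp (-(I * s * u))) • w u ∂μ := by
        simp only [fourierStieltjes, mul_smul, integral_smul]
    _ = ∫ u, (∫ s in a..b, (k s * Complex.exp (-(I * s * u))) • w u) ∂μ :=
        intervalIntegral_integral_swap (integrable_mul_exp_smul_prod hk hw)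
    _ = _ := by simp_rw [intervalIntegral.integral_smul_const]

end FourierStieltjes

section SymmetricIntegral

variable {E : Type*} [NormedAddCommGroup E] [NormedSpace ℂ E] {μ : Measure ℝ} {w : ℝ → E}

/-- The truncated integral of `g` over `{s : S < |s| < T}`, as a sum of two interval integrals. -/
noncomputable def symmetricIntegral (g : ℝ → E) (S T : ℝ) : E :=
  (∫ s in (-T)..(-S), g s) + ∫ s in S..T, g s

lemma symmetricIntegral_congr {g h : ℝ → E} (hgh : ∀ s ≠ 0, g s = h s) {S T : ℝ} (hS : 0 < S)
    (hT : 0 < T) : symmetricIntegral g S T = symmetricIntegral h S T := by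
  have hpos (s : ℝ) (hs : s ∈ uIcc S T) : g s = h s :=
    hgh s (ne_of_mem_of_not_mem hs (notMem_uIcc_of_lt hS hT))
  have hneg (s : ℝ) (hs : s ∈ uIcc (-T) (-S)) : g s = h s :=
    hgh s (ne_of_mem_of_not_mem hs (notMem_uIcc_of_gt (neg_lt_zero.2 hT) (neg_lt_zero.2 hS)))
  rw [symmetricIntegral, symmetricIntegral, intervalIntegral.integral_congr hneg,
    intervalIntegral.integral_congr hpos]

lemma intervalIntegrable_exp_mul_inv (y : ℝ) {a b : ℝ} (hab : 0 ∉ uIcc a b) :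
    IntervalIntegrable (fun s : ℝ => Complex.exp (I * y * s) * (I * s)⁻¹) volume a b := by
  refine ContinuousOn.intervalIntegrable (ContinuousOn.mul (by fun_prop)
    (ContinuousOn.inv₀ (by fun_prop) fun s hs => ?_))
  simp [ne_of_mem_of_not_mem hs hab]

lemma exp_mul_inv_add_exp_mul_inv_neg {s : ℝ} (hs : s ≠ 0) (y : ℝ) :
    Complex.exp (I * y * (-s : ℝ)) * (I * (-s : ℝ))⁻¹ + Complex.exp (I * y * s) * (I * s)⁻¹ =
      ((2 * (y * Real.sinc (s * y)) : ℝ) : ℂ) := by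
  have hsC : (s : ℂ) ≠ 0 := by exact_mod_cast hs
  have hsinc : y * Real.sinc (s * y) = Real.sin (s * y) / s := by
    rcases eq_or_ne y 0 with rfl | hy
    · simp
    · rw [Real.sinc_of_ne_zero (mul_ne_zero hs hy)]
      field_simp
  rw [hsinc]
  push_cast
  rw [Complex.sin, show I * y * -s = -(s * y) * I by ring, show I * y * s = s * y * I by ring]
  field_simp
  simp only [Complex.I_sq]
  ring

lemma symmetricIntegral_exp_mul_inv (y : ℝ) {S T : ℝ} (hS : 0 < S) (hT : 0 < T) :
    symmetricIntegral (fun s : ℝ => Complex.exp (I * y * s) * (I * s)⁻¹) S T =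
      ((2 * (sineIntegral (T * y) - sineIntegral (S * y)) : ℝ) : ℂ) := by
  have h0 : (0 : ℝ) ∉ uIcc S T := notMem_uIcc_of_lt hS hT
  have hint := intervalIntegrable_exp_mul_inv y h0
  have hint_neg : IntervalIntegrable
      (fun s : ℝ => Complex.exp (I * y * (-s : ℝ)) * (I * (-s : ℝ))⁻¹) volume S T :=
    (intervalIntegrable_exp_mul_inv (-y) h0).neg.congr fun s _ => by simp [inv_neg]
  rw [symmetricIntegral, ← intervalIntegral.integral_comp_neg (a := S),
    ← intervalIntegral.integral_add hint_neg hint, intervalIntegral.integral_congr fun s hs =>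
      exp_mul_inv_add_exp_mul_inv_neg (ne_of_mem_of_not_mem hs h0) y,
    intervalIntegral.integral_ofReal, intervalIntegral.integral_const_mul,
    sineIntegral.integral_mul_sinc_mul]

lemma symmetricIntegral_exp_mul_inv_smul_fourierStieltjes [CompleteSpace E] [SFinite μ]
    (hw : Integrable w μ) (x : ℝ) {S T : ℝ} (hS : 0 < S) (hT : 0 < T) :
    symmetricIntegral
        (fun s : ℝ => (Complex.exp (I * x * s) * (I * s)⁻¹) • fourierStieltjes μ w s) S T =
      ∫ u, ((2 * (sineIntegral (T * (x - u)) - sineIntegral (S * (x - u))) : ℝ) : ℂ) • w u ∂μ := by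
  have hkernel (s u : ℝ) : Complex.exp (I * x * s) * (I * s)⁻¹ * Complex.exp (-(I * s * u)) =
      Complex.exp (I * (x - u : ℝ) * s) * (I * s)⁻¹ := by
    rw [mul_right_comm, ← Complex.exp_add]
    congr 2
    push_cast
    ring
  have hpos := intervalIntegrable_exp_mul_inv x (notMem_uIcc_of_lt hS hT)
  have hneg := intervalIntegrable_exp_mul_inv x
    (notMem_uIcc_of_gt (neg_lt_zero.2 hT) (neg_lt_zero.2 hS))
  rw [symmetricIntegral, intervalIntegral_smul_fourierStieltjes hneg hw,
    intervalIntegral_smul_fourierStieltjes hpos hw,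
    ← integral_add (integrable_intervalIntegral_mul_exp_smul hneg hw)
      (integrable_intervalIntegral_mul_exp_smul hpos hw)]
  simp_rw [hkernel, ← add_smul, ← symmetricIntegral_exp_mul_inv _ hS hT]
  rfl

lemma integral_sign_sub_smul (hw : Integrable w μ) (x : ℝ) :
    ∫ u, (((SignType.sign (x - u) : ℝ)) : ℂ) • w u ∂μ =
      (∫ u in Iio x, w u ∂μ) - ∫ u in Ioi x, w u ∂μ := by
  have hsign (u : ℝ) : (((SignType.sign (x - u) : ℝ)) : ℂ) • w u =
      (Iio x).indicator w u - (Ioi x).indicator w u := by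
    rcases lt_trichotomy u x with h | rfl | h
    · simp [sign_pos (sub_pos.2 h), h, h.le]
    · simp
    · simp [sign_neg (sub_neg.2 h), h, h.le]
  simp_rw [hsign]
  rw [integral_sub (hw.indicator measurableSet_Iio) (hw.indicator measurableSet_Ioi),
    integral_indicator measurableSet_Iio, integral_indicator measurableSet_Ioi]

lemma tendsto_integral_sineIntegral_smul (hw : Integrable w μ) (x : ℝ) :
    Tendsto (fun P : ℝ × ℝ => ∫ u,
        ((2 * (sineIntegral (P.1 * (x - u)) - sineIntegral (P.2 * (x - u))) : ℝ) : ℂ) • w u ∂μ)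
      (atTop ×ˢ 𝓝[>] 0)
      (𝓝 ((Real.pi : ℂ) • ((∫ u in Iio x, w u ∂μ) - ∫ u in Ioi x, w u ∂μ))) := by
  rw [← integral_sign_sub_smul hw, ← integral_smul]
  refine tendsto_integral_filter_of_dominated_convergence
    (fun u => 4 * (Real.pi / 2 + 1) * ‖w u‖) ?_ ?_ (hw.norm.const_mul _) ?_
  · refine Eventually.of_forall fun P => AEStronglyMeasurable.smul ?_ hw.aestronglyMeasurable
    exact Continuous.aestronglyMeasurable (by fun_prop)
  · refine Eventually.of_forall fun P => ae_of_all _ fun u => ?_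
    rw [norm_smul, Complex.norm_real, Real.norm_eq_abs, abs_mul, abs_two]
    refine mul_le_mul_of_nonneg_right ?_ (norm_nonneg _)
    have hsub := abs_sub (sineIntegral (P.1 * (x - u))) (sineIntegral (P.2 * (x - u)))
    linarith [sineIntegral.abs_le (P.1 * (x - u)), sineIntegral.abs_le (P.2 * (x - u))]
  · refine ae_of_all _ fun u => ?_
    have hT : Tendsto (fun P : ℝ × ℝ => sineIntegral (P.1 * (x - u))) (atTop ×ˢ 𝓝[>] 0)
        (𝓝 (Real.pi / 2 * SignType.sign (x - u))) :=
      (sineIntegral.tendsto_mul_const_atTop (x - u)).comp tendsto_fst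
    have hcont : Continuous fun S : ℝ => sineIntegral (S * (x - u)) := by fun_prop
    have hS : Tendsto (fun P : ℝ × ℝ => sineIntegral (P.2 * (x - u))) (atTop ×ˢ 𝓝[>] 0)
        (𝓝 (sineIntegral (0 * (x - u)))) :=
      (hcont.tendsto 0).comp (tendsto_snd.mono_right nhdsWithin_le_nhds)
    have hlim : Tendsto (fun P : ℝ × ℝ =>
        2 * (sineIntegral (P.1 * (x - u)) - sineIntegral (P.2 * (x - u)))) (atTop ×ˢ 𝓝[>] 0)
        (𝓝 (Real.pi * SignType.sign (x - u))) := by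
      convert (hT.sub hS).const_mul 2 using 2
      rw [zero_mul, sineIntegral.zero]
      ring
    rw [smul_smul, ← Complex.ofReal_mul]
    exact ((Complex.continuous_ofReal.tendsto _).comp hlim).smul_const (w u)

lemma tendsto_symmetricIntegral_fourierStieltjes [CompleteSpace E] [SFinite μ]
    (hw : Integrable w μ) (x : ℝ) :
    Tendsto (fun P : ℝ × ℝ => symmetricIntegral
        (fun s : ℝ => (Complex.exp (I * x * s) * (I * s)⁻¹) • fourierStieltjes μ w s) P.2 P.1)
      (atTop ×ˢ 𝓝[>] 0)
      (𝓝 ((Real.pi : ℂ) • ((∫ u in Iio x, w u ∂μ) - ∫ u in Ioi x, w u ∂μ))) := by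
  refine (tendsto_integral_sineIntegral_smul hw x).congr' ?_
  filter_upwards [(eventually_gt_atTop 0).prod_mk self_mem_nhdsWithin] with P ⟨hT, hS⟩
  exact (symmetricIntegral_exp_mul_inv_smul_fourierStieltjes hw x hS hT).symm

end SymmetricIntegral

section BoundedVariation

variable {α : Type*} [MeasurableSpace α]

lemma signedMeasure_apply_eq_setIntegral_rnDeriv {s : SignedMeasure α} {μ : Measure α}
    [SigmaFinite μ] (hs : s.totalVariation ≪ μ) {A : Set α} (hA : MeasurableSet A) :
    s A = ∫ a in A, s.rnDeriv μ a ∂μ := by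
  have hac : s ≪ᵥ μ.toENNRealVectorMeasure := by
    rwa [SignedMeasure.absolutelyContinuous_ennreal_iff,
      VectorMeasure.ennrealToMeasure_toENNRealVectorMeasure]
  rw [← withDensityᵥ_apply (SignedMeasure.integrable_rnDeriv s μ) hA,
    SignedMeasure.withDensityᵥ_rnDeriv_eq s μ hac]

lemma exists_integrable_forall_apply_eq_setIntegral (c : ComplexMeasure α) :
    ∃ (μ : Measure α) (w : α → ℂ), IsFiniteMeasure μ ∧ Integrable w μ ∧
      ∀ A, MeasurableSet A → c A = ∫ a in A, w a ∂μ := by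
  let μ := c.re.totalVariation + c.im.totalVariation
  have hre : c.re.totalVariation ≪ μ := (Measure.le_add_right le_rfl).absolutelyContinuous
  have him : c.im.totalVariation ≪ μ := (Measure.le_add_left le_rfl).absolutelyContinuous
  have hw := c.integrable_rnDeriv μ
  refine ⟨μ, c.rnDeriv μ, inferInstance, hw, fun A hA => Complex.ext ?_ ?_⟩
  · exact (signedMeasure_apply_eq_setIntegral_rnDeriv hre hA).trans (integral_re hw.integrableOn)
  · exact (signedMeasure_apply_eq_setIntegral_rnDeriv him hA).trans (integral_im hw.integrableOn)

lemma exists_density_of_boundedVariationOn {f : ℝ → ℂ} (hf : BoundedVariationOn f univ) {l : ℂ}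
    (htop : Tendsto f atTop (𝓝 l)) (hbot : Tendsto f atBot (𝓝 0)) :
    ∃ (μ : Measure ℝ) (w : ℝ → ℂ), IsFiniteMeasure μ ∧ Integrable w μ ∧ ∫ u, w u ∂μ = l ∧
      (∀ t, ∫ u in Iic t, w u ∂μ = f.rightLim t) ∧ ∀ t, ∫ u in Iio t, w u ∂μ = f.leftLim t := by
  obtain ⟨μ, w, hμ, hw, happly⟩ := exists_integrable_forall_apply_eq_setIntegral hf.vectorMeasure
  refine ⟨μ, w, hμ, hw, ?_, fun t => ?_, fun t => ?_⟩
  · rw [← setIntegral_univ, ← happly _ .univ, hf.vectorMeasure_univ, htop.limUnder_eq,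
      hbot.limUnder_eq, sub_zero]
  · rw [← happly _ measurableSet_Iic, hf.vectorMeasure_Iic, hbot.limUnder_eq, sub_zero]
  · rw [← happly _ measurableSet_Iio, hf.vectorMeasure_Iio, hbot.limUnder_eq, sub_zero]

lemma ae_rightLim_eq {V : Type*} [NormedAddCommGroup V] [NormedSpace ℝ V] [FiniteDimensional ℝ V]
    {f : ℝ → V} (hf : LocallyBoundedVariationOn f univ) : ∀ᵐ t, f.rightLim t = f t := by
  filter_upwards [hf.ae_differentiableAt] with t ht
  exact rightLim_eq_of_tendsto (ht.continuousAt.tendsto.mono_left nhdsWithin_le_nhds)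

end BoundedVariation

theorem pringsheim_fourier_inversion_general {f : ℝ → ℂ} (hf : BoundedVariationOn f univ)
    (htop : Tendsto f atTop (𝓝 0)) (hbot : Tendsto f atBot (𝓝 0)) {F : ℝ → ℂ}
    (hF : ∀ s : ℝ, s ≠ 0 → Tendsto
      (fun P : ℝ × ℝ => ∫ t in P.1..P.2, Complex.exp (-(I * s * t)) * f t)
      (atBot ×ˢ atTop) (𝓝 (F s)))
    {x : ℝ} {fl fr : ℂ} (hfl : Tendsto f (𝓝[<] x) (𝓝 fl)) (hfr : Tendsto f (𝓝[>] x) (𝓝 fr)) :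
    Tendsto (fun P : ℝ × ℝ => (1 / (2 * (Real.pi : ℂ))) *
        symmetricIntegral (fun s => Complex.exp (I * x * s) * F s) P.2 P.1)
      (atTop ×ˢ 𝓝[>] 0) (𝓝 ((fl + fr) / 2)) := by
  obtain ⟨μ, w, hμ, hw, hw0, hIic, hIio⟩ := exists_density_of_boundedVariationOn hf htop hbot
  have hFourier (s : ℝ) (hs : s ≠ 0) : F s = (I * s)⁻¹ • fourierStieltjes μ w s := by
    refine tendsto_nhds_unique (hF s hs)
      ((tendsto_integral_exp_smul_setIntegral_Iic hw hw0 hs).congr fun P => ?_)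
    refine intervalIntegral.integral_congr_ae ?_
    filter_upwards [ae_rightLim_eq hf.locallyBoundedVariationOn] with t ht _
    rw [hIic, ht, smul_eq_mul]
  have hvalue : (∫ u in Iio x, w u ∂μ) - ∫ u in Ioi x, w u ∂μ = fl + fr := by
    have hcompl := integral_add_compl (measurableSet_Iic (a := x)) hw
    rw [compl_Iic, hw0, hIic, rightLim_eq_of_tendsto hfr] at hcompl
    rw [hIio, leftLim_eq_of_tendsto hfl, eq_neg_of_add_eq_zero_left hcompl, sub_eq_add_neg]
  have hlim := (tendsto_symmetricIntegral_fourierStieltjes hw x).const_mul (1 / (2 * Real.pi : ℂ))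
  have hpi : (Real.pi : ℂ) ≠ 0 := by exact_mod_cast Real.pi_ne_zero
  rw [hvalue, show 1 / (2 * Real.pi : ℂ) * ((Real.pi : ℂ) • (fl + fr)) = (fl + fr) / 2 by
    rw [smul_eq_mul]; field_simp] at hlim
  refine hlim.congr' ?_
  filter_upwards [(eventually_gt_atTop 0).prod_mk self_mem_nhdsWithin] with P ⟨hT, hS⟩
  congr 1
  refine symmetricIntegral_congr (fun s hs => ?_) hS hT
  rw [hFourier s hs, smul_eq_mul, smul_eq_mul, mul_assoc]

/-- Pringsheim's inversion theorem: `f` of bounded variation on `ℝ` with limit `0` at `±∞`,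
`F s = f̂(s)` the improper-integral Fourier transform (for `s ≠ 0`).  Then for each `x`,
`(f(x-)+f(x+))/2 = (1/(2π)) lim_{T→∞, S→0⁺} ∫_{S<|s|<T} e^{ixs} f̂(s) ds`, where the
integral over `{S<|s|<T}` is `∫_{-T}^{-S} + ∫_S^T`. -/
theorem pringsheim_fourier_inversion (f : ℝ → ℝ)
    (hbv : BoundedVariationOn f Set.univ)
    (htop : Filter.Tendsto f Filter.atTop (nhds 0))
    (hbot : Filter.Tendsto f Filter.atBot (nhds 0))
    (F : ℝ → ℂ)
    (hF : ∀ s : ℝ, s ≠ 0 → Filter.Tendsto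
      (fun P : ℝ × ℝ =>
        ∫ t in P.1..P.2, Complex.exp (-(Complex.I * s * t)) * ((f t : ℝ) : ℂ))
      (Filter.atBot ×ˢ Filter.atTop) (nhds (F s)))
    (x fl fr : ℝ)
    (hfl : Filter.Tendsto f (nhdsWithin x (Set.Iio x)) (nhds fl))
    (hfr : Filter.Tendsto f (nhdsWithin x (Set.Ioi x)) (nhds fr)) :
    Filter.Tendsto
      (fun P : ℝ × ℝ => (1 / (2 * (Real.pi : ℂ))) *
        ((∫ s in (-P.1)..(-P.2), Complex.exp (Complex.I * x * s) * F s) +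
          ∫ s in P.2..P.1, Complex.exp (Complex.I * x * s) * F s))
      (Filter.atTop ×ˢ nhdsWithin 0 (Set.Ioi 0))
      (nhds (((fl + fr) / 2 : ℝ) : ℂ)) := by
  have hofReal := Complex.continuous_ofReal.tendsto
  have hbvC : BoundedVariationOn (fun t => (f t : ℂ)) univ :=
    Complex.isometry_ofReal.lipschitz.comp_boundedVariationOn hbv
  have hlim := pringsheim_fourier_inversion_general hbvC ((hofReal 0).comp htop)
    ((hofReal 0).comp hbot) hF ((hofReal fl).comp hfl) ((hofReal fr).comp hfr)
  exact_mod_cast hlim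
end
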